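/- Let f(z) = z + Σ_{n≥2} a_n z^n and g(z) = z + Σ_{n≥2} b_n z^n be analytic on the unit disk 𝔻, with f and g nonvanishing on the punctured disk 0 < |z| < 1, and suppose |a_n| ≤ (n+1)/2 and |b_n| ≤ n for all n ≥ 2. Then the function F(z) = z^3/(f(z)g(z)) satisfies |F'(z)(z/F(z))^2 − 1| < 1 for every z with 0 < |z| < (5 − √17)/4 ≈ 0.21922; in particular F belongs to the class 𝒰 in the disk |z| < (5 − √17)/4. -/

import Mathlib

/-!
Write `f z = z (1 + P)`, `g z = z (1 + Q)`, and let `P₁ = z P'`, `Q₁ = z Q'`. Since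
`z / F = (1 + P) (1 + Q)`, a direct computation gives
`F' (z / F)² - 1 = -((P₁ - P) + (Q₁ - Q) + (P₁ - P) Q + P Q₁)`.
All five series `P`, `Q`, `P₁ - P`, `Q₁ - Q`, `Q₁` are power series whose coefficients are
nonnegative multiples of the coefficients of `f` or `g`, so each is bounded (`norm_tail_le`) by its
value for the extremal coefficients `(n + 1) / 2` and `n` at `r = ‖z‖`. These values are
combinations of `∑ (m + k choose k) r ^ m = (1 - r)⁻¹ ^ (k + 1)` for `k = 0, 1, 2` (`hasSum_quad`).
With `H = (2 - r) / (2 (1 - r)⁴)`, the resulting bound is `1 - (H - r H')`, and it is less than `1`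
exactly when `2 r² - 5 r + 1 > 0` (`majorant_lt_one`), whose smaller root is `(5 - √17) / 4`.
-/

/-- A power series without constant term differs from its linear term by at most `‖z‖²` times a
majorant series for the coefficients of index at least `2`. -/
lemma norm_tail_le {c : ℕ → ℂ} {z S : ℂ} {d : ℕ → ℝ} {D : ℝ}
    (hS : HasSum (fun n : ℕ => c n * z ^ n) S) (h0 : c 0 = 0)
    (hd : ∀ m, ‖c (m + 2)‖ ≤ d m) (hD : HasSum (fun m => d m * ‖z‖ ^ m) D) :
    ‖S - c 1 * z‖ ≤ ‖z‖ ^ 2 * D := by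
  have h1 : HasSum (fun m : ℕ => c (m + 2) * z ^ (m + 2)) (S - c 1 * z) := by
    have := (hasSum_nat_add_iff' 2).2 hS
    simpa [Finset.sum_range_succ, h0] using this
  rw [← h1.tsum_eq]
  refine tsum_of_norm_bounded (hD.mul_left (‖z‖ ^ 2)) fun m => ?_
  rw [norm_mul, norm_pow]
  calc ‖c (m + 2)‖ * ‖z‖ ^ (m + 2) ≤ d m * ‖z‖ ^ (m + 2) := by gcongr; exact hd m
    _ = _ := by ring

/-- Generating function of a quadratic polynomial in the basis
`(m + 1) (m + 2) / 2, m + 1, 1` of binomial coefficients. -/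
lemma hasSum_quad {r : ℝ} (h0 : 0 ≤ r) (h1 : r < 1) (x y w : ℝ) :
    HasSum (fun m : ℕ => (x * ((m + 1) * (m + 2) / 2) + y * (m + 1) + w) * r ^ m)
      (x * (1 - r)⁻¹ ^ 3 + y * (1 - r)⁻¹ ^ 2 + w * (1 - r)⁻¹) := by
  have hr : ‖r‖ < 1 := by rwa [Real.norm_of_nonneg h0]
  have e0 := (hasSum_geometric_of_norm_lt_one hr).mul_left w
  have e1 := (hasSum_choose_mul_geometric_of_norm_lt_one 1 hr).mul_left y
  have e2 := (hasSum_choose_mul_geometric_of_norm_lt_one 2 hr).mul_left x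
  have e := (e2.add e1).add e0
  simp only [one_div, ← inv_pow] at e
  refine e.congr_fun fun m => ?_
  rw [Nat.cast_choose_two]
  push_cast [Nat.choose_one_right]
  ring

/-- Termwise differentiation of a power series with linearly bounded coefficients, in the form
`z f'(z) = ∑ n cₙ zⁿ`. -/
lemma hasSum_mul_deriv {f : ℂ → ℂ} {c : ℕ → ℂ}
    (hf : ∀ z ∈ Metric.ball (0:ℂ) 1, HasSum (fun n : ℕ => c n * z ^ n) (f z))
    (hc : ∀ n : ℕ, ‖c n‖ ≤ (n : ℝ) + 1) {z : ℂ} (hz : ‖z‖ < 1) :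
    HasSum (fun n : ℕ => ((n : ℂ) * c n) * z ^ n) (z * deriv f z) := by
  obtain ⟨ρ, hzρ, hρ⟩ := exists_between hz
  have hρ0 : 0 ≤ ρ := (norm_nonneg z).trans hzρ.le
  have hu : Summable (fun n : ℕ => ((n : ℝ) + 1) * ρ ^ n) := by
    simpa using (hasSum_quad hρ0 hρ 0 1 0).summable
  have key := Complex.hasSum_deriv_of_summable_norm (F := fun (n : ℕ) (w : ℂ) => c n * w ^ n)
    (U := Metric.ball (0:ℂ) ρ) hu (fun n => by fun_prop) Metric.isOpen_ball
    (fun n w hw => by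
      have hw' : ‖w‖ ≤ ρ := by simpa using (Metric.mem_ball.1 hw).le
      rw [norm_mul, norm_pow]
      gcongr
      exact hc n) (z := z) (by simpa using hzρ)
  have heq : deriv (fun w => ∑' n : ℕ, c n * w ^ n) z = deriv f z := by
    apply Filter.EventuallyEq.deriv_eq
    filter_upwards [Metric.isOpen_ball.mem_nhds (show z ∈ Metric.ball (0:ℂ) 1 by simpa using hz)]
      with w hw
    exact (hf w hw).tsum_eq
  rw [heq] at key
  refine (key.mul_left z).congr_fun fun n => ?_
  rcases n with _ | n
  · simp
  · simp
    ring

lemma majorant_lt_one {r : ℝ} (h0 : 0 < r) (h1 : r < (5 - Real.sqrt 17) / 4) :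
    r * ((1 - r)⁻¹ ^ 3 - (1 - r)⁻¹)
      + r * (2 * (1 - r)⁻¹ ^ 3 - (1 - r)⁻¹ ^ 2 - (1 - r)⁻¹)
      + r ^ 2 * (((1 - r)⁻¹ ^ 3 - (1 - r)⁻¹) * ((1 - r)⁻¹ ^ 2 + (1 - r)⁻¹))
      + r ^ 2 * ((1 / 2 * (1 - r)⁻¹ ^ 2 + (1 - r)⁻¹) * (2 * (1 - r)⁻¹ ^ 3)) < 1 := by
  have hs : Real.sqrt 17 ^ 2 = 17 := Real.sq_sqrt (by norm_num)
  have hs0 : 0 ≤ Real.sqrt 17 := Real.sqrt_nonneg _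
  have hs4 : 4 < Real.sqrt 17 := by nlinarith
  have hpoly : 0 < 2 * r ^ 2 - 5 * r + 1 := by nlinarith
  have hr : 0 < 1 - r := by linarith
  have hid : r * ((1 - r)⁻¹ ^ 3 - (1 - r)⁻¹)
      + r * (2 * (1 - r)⁻¹ ^ 3 - (1 - r)⁻¹ ^ 2 - (1 - r)⁻¹)
      + r ^ 2 * (((1 - r)⁻¹ ^ 3 - (1 - r)⁻¹) * ((1 - r)⁻¹ ^ 2 + (1 - r)⁻¹))
      + r ^ 2 * ((1 / 2 * (1 - r)⁻¹ ^ 2 + (1 - r)⁻¹) * (2 * (1 - r)⁻¹ ^ 3))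
      = 1 - (2 * r ^ 2 - 5 * r + 1) / (1 - r) ^ 5 := by
    field_simp
    ring
  rw [hid]
  have : 0 < (2 * r ^ 2 - 5 * r + 1) / (1 - r) ^ 5 := by positivity
  linarith

theorem radius_univalence_coeff_halfNplusOne_n
    (f g F : ℂ → ℂ) (a b : ℕ → ℂ)
    (hfa : AnalyticOnNhd ℂ f (Metric.ball (0:ℂ) 1))
    (hga : AnalyticOnNhd ℂ g (Metric.ball (0:ℂ) 1))
    (ha0 : a 0 = 0) (ha1 : a 1 = 1) (hb0 : b 0 = 0) (hb1 : b 1 = 1)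
    (hf : ∀ z ∈ Metric.ball (0:ℂ) 1, HasSum (fun n : ℕ => a n * z ^ n) (f z))
    (hg : ∀ z ∈ Metric.ball (0:ℂ) 1, HasSum (fun n : ℕ => b n * z ^ n) (g z))
    (hfne : ∀ z : ℂ, 0 < ‖z‖ → ‖z‖ < 1 → f z ≠ 0)
    (hgne : ∀ z : ℂ, 0 < ‖z‖ → ‖z‖ < 1 → g z ≠ 0)
    (hA : ∀ n : ℕ, 2 ≤ n → ‖a n‖ ≤ ((n : ℝ) + 1) / 2)
    (hB : ∀ n : ℕ, 2 ≤ n → ‖b n‖ ≤ (n : ℝ))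
    (hF : ∀ z : ℂ, F z = z ^ 3 / (f z * g z)) :
    ∀ z : ℂ, 0 < ‖z‖ → ‖z‖ < (5 - Real.sqrt 17) / 4 →
      ‖deriv F z * (z / F z) ^ 2 - 1‖ < 1 := by
  intro z hz0 hzr
  have hz1 : ‖z‖ < 1 := by
    have : (1 : ℝ) ≤ Real.sqrt 17 := Real.one_le_sqrt.2 (by norm_num)
    linarith
  have hzb : z ∈ Metric.ball (0:ℂ) 1 := by simpa using hz1
  have hz : z ≠ 0 := norm_pos_iff.1 hz0
  have hfz := hfne z hz0 hz1
  have hgz := hgne z hz0 hz1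
  have hA' (m : ℕ) : ‖a (m + 2)‖ ≤ ((m : ℝ) + 3) / 2 := by
    have := hA (m + 2) (by omega)
    push_cast at this
    linarith
  have hB' (m : ℕ) : ‖b (m + 2)‖ ≤ (m : ℝ) + 2 := by
    have := hB (m + 2) (by omega)
    push_cast at this
    linarith
  have hAall : ∀ n : ℕ, ‖a n‖ ≤ (n : ℝ) + 1
    | 0 => by simp [ha0]
    | 1 => by simp [ha1]
    | m + 2 => by
      have := hA' m
      push_cast
      linarith [Nat.cast_nonneg (α := ℝ) m]
  have hBall : ∀ n : ℕ, ‖b n‖ ≤ (n : ℝ) + 1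
    | 0 => by simp [hb0]
    | 1 => by simp [hb1]
    | m + 2 => by
      have := hB' m
      push_cast
      linarith
  have sf := hf z hzb
  have sg := hg z hzb
  have sf' := hasSum_mul_deriv hf hAall hz1
  have sg' := hasSum_mul_deriv hg hBall hz1
  have quad := hasSum_quad hz0.le hz1
  set s := (1 - ‖z‖)⁻¹ with hs
  -- `z P`
  have bP : ‖f z - z‖ ≤ ‖z‖ ^ 2 * (1 / 2 * s ^ 2 + s) := by
    have := norm_tail_le sf ha0 (d := fun m : ℕ =>
      0 * (((m : ℝ) + 1) * (m + 2) / 2) + 1 / 2 * (m + 1) + 1)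
      (fun m => (hA' m).trans_eq (by ring)) (quad _ _ _)
    simpa [ha1] using this
  -- `z Q`
  have bQ : ‖g z - z‖ ≤ ‖z‖ ^ 2 * (s ^ 2 + s) := by
    have := norm_tail_le sg hb0 (d := fun m : ℕ =>
      0 * (((m : ℝ) + 1) * (m + 2) / 2) + 1 * (m + 1) + 1)
      (fun m => (hB' m).trans_eq (by ring)) (quad _ _ _)
    simpa [hb1] using this
  -- `z (P₁ - P)`
  have bP1 : ‖z * deriv f z - 2 * f z + z‖ ≤ ‖z‖ ^ 2 * (s ^ 3 - s) := by
    have hS : HasSum (fun n : ℕ => (((n : ℂ) - 2) * a n) * z ^ n)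
        (z * deriv f z - 2 * f z) := by
      refine (sf'.sub (sf.mul_left 2)).congr_fun fun n => ?_
      ring
    have := norm_tail_le hS (by simp [ha0]) (d := fun m : ℕ =>
      1 * (((m : ℝ) + 1) * (m + 2) / 2) + 0 * (m + 1) + (-1)) (fun m => by
        have e : (((m + 2 : ℕ) : ℂ) - 2) = (m : ℂ) := by push_cast; ring
        rw [e, norm_mul, Complex.norm_natCast]
        calc (m : ℝ) * ‖a (m + 2)‖ ≤ m * (((m : ℝ) + 3) / 2) := by gcongr; exact hA' m
          _ = _ := by ring) (quad _ _ _)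
    convert this using 2
    · simp only [ha1]
      push_cast
      ring
    · ring
  -- `z (Q₁ - Q)`
  have bQ1 : ‖z * deriv g z - 2 * g z + z‖ ≤ ‖z‖ ^ 2 * (2 * s ^ 3 - s ^ 2 - s) := by
    have hS : HasSum (fun n : ℕ => (((n : ℂ) - 2) * b n) * z ^ n)
        (z * deriv g z - 2 * g z) := by
      refine (sg'.sub (sg.mul_left 2)).congr_fun fun n => ?_
      ring
    have := norm_tail_le hS (by simp [hb0]) (d := fun m : ℕ =>
      2 * (((m : ℝ) + 1) * (m + 2) / 2) + (-1) * (m + 1) + (-1)) (fun m => by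
        have e : (((m + 2 : ℕ) : ℂ) - 2) = (m : ℂ) := by push_cast; ring
        rw [e, norm_mul, Complex.norm_natCast]
        calc (m : ℝ) * ‖b (m + 2)‖ ≤ m * ((m : ℝ) + 2) := by gcongr; exact hB' m
          _ = _ := by ring) (quad _ _ _)
    convert this using 2
    · simp only [hb1]
      push_cast
      ring
    · ring
  -- `z Q₁`
  have bQ2 : ‖z * deriv g z - g z‖ ≤ ‖z‖ ^ 2 * (2 * s ^ 3) := by
    have hS : HasSum (fun n : ℕ => (((n : ℂ) - 1) * b n) * z ^ n)
        (z * deriv g z - g z) := by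
      refine (sg'.sub sg).congr_fun fun n => ?_
      ring
    have := norm_tail_le hS (by simp [hb0]) (d := fun m : ℕ =>
      2 * (((m : ℝ) + 1) * (m + 2) / 2) + 0 * (m + 1) + 0) (fun m => by
        have e : (((m + 2 : ℕ) : ℂ) - 1) = ((m + 1 : ℕ) : ℂ) := by push_cast; ring
        rw [e, norm_mul, Complex.norm_natCast]
        push_cast
        calc ((m : ℝ) + 1) * ‖b (m + 2)‖ ≤ (m + 1) * ((m : ℝ) + 2) := by gcongr; exact hB' m
          _ = _ := by ring) (quad _ _ _)
    simpa using this
  have dF : deriv F z = (3 * z ^ 2 * (f z * g z) - z ^ 3 * (deriv f z * g z + f z * deriv g z))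
      / (f z * g z) ^ 2 := by
    have hFeq : F = fun w => w ^ 3 / (f w * g w) := funext hF
    rw [hFeq]
    have h1 := (hfa z hzb).differentiableAt.hasDerivAt
    have h2 := (hga z hzb).differentiableAt.hasDerivAt
    have h3 := (hasDerivAt_pow 3 z).fun_div (h1.fun_mul h2) (mul_ne_zero hfz hgz)
    simpa using h3.deriv
  have hU : deriv F z * (z / F z) ^ 2 - 1 =
      -((z * deriv f z - 2 * f z + z) / z + (z * deriv g z - 2 * g z + z) / z
        + (z * deriv f z - 2 * f z + z) / z * ((g z - z) / z)
        + (f z - z) / z * ((z * deriv g z - g z) / z)) := by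
    rw [dF, hF]
    field_simp
    ring
  -- Each numerator above is `O(z²)`, so dividing by `z` costs one factor `‖z‖`.
  have hdiv {w : ℂ} {D : ℝ} (h : ‖w‖ ≤ ‖z‖ ^ 2 * D) : ‖w / z‖ ≤ ‖z‖ * D := by
    rw [norm_div, div_le_iff₀ hz0]
    linarith
  have cP := hdiv bP
  have cQ := hdiv bQ
  have cP1 := hdiv bP1
  have cQ1 := hdiv bQ1
  have cQ2 := hdiv bQ2
  rw [hU, norm_neg]
  refine lt_of_le_of_lt ?_ (majorant_lt_one hz0 hzr)
  rw [← hs]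
  have m1 := mul_le_mul cP1 cQ (norm_nonneg _) ((norm_nonneg _).trans cP1)
  have m2 := mul_le_mul cP cQ2 (norm_nonneg _) ((norm_nonneg _).trans cP)
  rw [← norm_mul] at m1 m2
  calc _ ≤ _ := norm_add₄_le
    _ ≤ _ := add_le_add (add_le_add (add_le_add cP1 cQ1) m1) m2
    _ = _ := by ring
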